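/- arXiv:2105.02496 — 5 statements merged into one kernel-verified Lean document; each statement's English description precedes it below -/
import Mathlib

section
/- Let G be a prolific graph. Then there exists r with 1 ≤ r ≤ 3 such that χ'(L^r(G)) > χ'(G), where the chromatic index is χ'(H) = χ(L(H)), the chromatic number of the line graph of H. -/
open SimpleGraph

/-- A bundled simple graph: a vertex type together with a simple graph on it. -/
structure FGraph where
  V : Type
  G : SimpleGraph V

/-- The line graph of a bundled graph: the vertices are the edges of `G`, two distinct
edges being adjacent iff they share an endpoint. -/
def FGraph.line (X : FGraph) : FGraph := ⟨X.G.edgeSet, X.G.lineGraph⟩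

/-- The `k`-fold iterated line graph `L^k(G)`. -/
def FGraph.iter (X : FGraph) (k : ℕ) : FGraph := FGraph.line^[k] X

/-- The number of vertices `n(G)`. -/
noncomputable def FGraph.n (X : FGraph) : ℕ := Nat.card X.V

/-- The number of edges `e(G)`. -/
noncomputable def FGraph.e (X : FGraph) : ℕ := Nat.card X.G.edgeSet

/-- The degree of a vertex. -/
noncomputable def FGraph.deg (X : FGraph) (v : X.V) : ℕ := Nat.card (X.G.neighborSet v)

/-- The maximum degree `Δ(G)`. -/
noncomputable def FGraph.maxDeg (X : FGraph) : ℕ := sSup (Set.range X.deg)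

/-- The minimum degree `δ(G)`. -/
noncomputable def FGraph.minDeg (X : FGraph) : ℕ := sInf (Set.range X.deg)

/-- The average degree `d(G) = 2e(G)/n(G)`, as a rational number. -/
noncomputable def FGraph.avgDeg (X : FGraph) : ℚ := 2 * (X.e : ℚ) / (X.n : ℚ)

/-- A graph is prolific if it is connected and isomorphic to no path graph `P_k`,
to no cycle graph `C_k`, and not to the star `K_{1,3}`. -/
def FGraph.Prolific (X : FGraph) : Prop :=
  X.G.Connected ∧
  (∀ k : ℕ, IsEmpty (X.G ≃g pathGraph k)) ∧
  (∀ k : ℕ, IsEmpty (X.G ≃g cycleGraph k)) ∧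
  IsEmpty (X.G ≃g completeBipartiteGraph (Fin 1) (Fin 3))

/-- The chromatic index `χ'(G) = χ(L(G))`. -/
noncomputable def FGraph.chromIndex (X : FGraph) : ℕ∞ := X.G.lineGraph.chromaticNumber

/-!
Put `H = L(G)` and `D = Δ(H)`; prolificity of `G` means exactly that `D ≥ 3`, and `r = 3` always
works. Since `χ(L(K)) ≥ Δ(K)`, the degree formula `deg (uv) = deg u + deg v - 2` in line graphs
gives `2 deg v + deg a + deg b - 6 ≤ χ(L³(H))` for distinct neighbours `a`, `b` of a vertex `v` of
`H`. As `H` is claw-free, every vertex of degree at least 3 lies in a triangle, so that it has two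
neighbours of degree at least 2.

* If `H` is `D`-colourable, a vertex `v` of degree `D` with two such neighbours yields
  `χ(L³(H)) ≥ 2D - 2 > D`.
* Otherwise greedy colouring finds two adjacent vertices of degree `D`; taking one as `v`, the
  other as `a`, and `b` from a triangle yields `χ(L³(H)) ≥ 3D - 4 > D + 1 ≥ χ(H)`.
-/

section Degree

variable {V : Type*} {G : SimpleGraph V} {v a b : V}

lemma one_lt_degree_of_adj [Fintype (G.neighborSet v)] (ha : G.Adj v a) (hb : G.Adj v b)
    (hab : a ≠ b) : 1 < G.degree v := by
  rw [← card_neighborFinset_eq_degree, Finset.one_lt_card]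
  exact ⟨a, by simpa using ha, b, by simpa using hb, hab⟩

lemma two_lt_degree_iff [Fintype (G.neighborSet v)] :
    2 < G.degree v ↔
      ∃ a b c, G.Adj v a ∧ G.Adj v b ∧ G.Adj v c ∧ a ≠ b ∧ a ≠ c ∧ b ≠ c := by
  rw [← card_neighborFinset_eq_degree, Finset.two_lt_card]
  simp only [mem_neighborFinset]
  grind

lemma exists_adj_ne_one_lt_degree_of_triangle [G.LocallyFinite] (hva : G.Adj v a)
    (hvb : G.Adj v b) (hab : G.Adj a b) (w : V) :
    ∃ x, G.Adj v x ∧ w ≠ x ∧ 1 < G.degree x := by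
  obtain rfl | hwa := eq_or_ne w a
  · exact ⟨b, hvb, hab.ne, one_lt_degree_of_adj hvb.symm hab.symm hva.ne⟩
  · exact ⟨a, hva, hwa, one_lt_degree_of_adj hva.symm hab hvb.ne⟩

end Degree

section GreedyColoring

variable {V : Type*} {G : SimpleGraph V} {n : ℕ}

lemma colorable_of_colorable_deleteIncidenceSet {v : V} [Fintype (G.neighborSet v)]
    (hv : G.degree v < n) (h : (G.deleteIncidenceSet v).Colorable n) : G.Colorable n := by
  classical
  obtain ⟨C⟩ := h
  obtain ⟨i, hi⟩ : ∃ i, ∀ w, G.Adj v w → C w ≠ i := by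
    have hcard : ((G.neighborFinset v).image C).card < (Finset.univ : Finset (Fin n)).card := by
      simpa using Finset.card_image_le.trans_lt hv
    obtain ⟨i, -, hi⟩ := Finset.exists_mem_notMem_of_card_lt_card hcard
    exact ⟨i, by simpa using hi⟩
  refine ⟨Coloring.mk (Function.update C v i) fun {a b} hab ↦ ?_⟩
  by_cases hav : a = v
  · subst hav
    simpa [hab.ne'] using (hi b hab).symm
  by_cases hbv : b = v
  · subst hbv
    simpa [hav] using hi a hab.symm
  · simpa [hav, hbv] using C.valid (deleteIncidenceSet_adj.2 ⟨hab, hav, hbv⟩)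

lemma colorable_of_forall_adj_degree_lt [Finite V] [hG : G.LocallyFinite] (hn : n ≠ 0)
    (h : ∀ a b, G.Adj a b → G.degree a < n ∨ G.degree b < n) : G.Colorable n := by
  classical
  induction G using WellFoundedLT.induction generalizing hG with
  | ind G ih =>
  obtain rfl | hne := eq_or_ne G ⊥
  · exact (colorable_one_iff.2 rfl).mono (Nat.one_le_iff_ne_zero.2 hn)
  obtain ⟨v, w, hvw, hv⟩ : ∃ v w, G.Adj v w ∧ G.degree v < n := by
    obtain ⟨a, b, hab⟩ := ne_bot_iff_exists_adj.1 hne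
    exact (h a b hab).elim (fun ha ↦ ⟨a, b, hab, ha⟩) fun hb ↦ ⟨b, a, hab.symm, hb⟩
  have hle := G.deleteIncidenceSet_le v
  have hlt : G.deleteIncidenceSet v < G :=
    hle.lt_of_ne fun heq ↦ (deleteIncidenceSet_adj.1 (heq ▸ hvw)).2.1 rfl
  have : Fintype V := .ofFinite V
  refine colorable_of_colorable_deleteIncidenceSet hv (ih _ hlt fun a b hab ↦ ?_)
  exact (h a b (hle hab)).imp (degree_le_of_le hle).trans_lt (degree_le_of_le hle).trans_lt

theorem chromaticNumber_le_maxDegree_add_one [Fintype V] [DecidableRel G.Adj] :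
    G.chromaticNumber ≤ (G.maxDegree + 1 : ℕ) :=
  (colorable_of_forall_adj_degree_lt (Nat.succ_ne_zero _) fun a _ _ ↦
    .inl (Nat.lt_succ_of_le (G.degree_le_maxDegree a))).chromaticNumber_le

end GreedyColoring

section LineGraph

variable {V : Type*} {G : SimpleGraph V}

lemma lineGraph_adj_of_mem {e f : G.edgeSet} {v : V} (hef : e ≠ f) (he : v ∈ e.1)
    (hf : v ∈ f.1) : G.lineGraph.Adj e f :=
  lineGraph_adj_iff_exists.2 ⟨hef, v, he, hf⟩

theorem degree_le_chromaticNumber_lineGraph (v : V) [Fintype (G.neighborSet v)] :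
    (G.degree v : ℕ∞) ≤ G.lineGraph.chromaticNumber := by
  classical
  refine le_chromaticNumber_of_pairwise_adj (ι := G.incidenceSet v)
    (by rw [Nat.card_eq_fintype_card, card_incidenceSet_eq_degree]) (fun e ↦ ⟨e, e.2.1⟩) ?_
  exact fun e f hef ↦ lineGraph_adj_of_mem (by simpa [Subtype.ext_iff] using hef) e.2.2 f.2.2

theorem degree_lineGraph_add_two [G.LocallyFinite] [G.lineGraph.LocallyFinite] {u v : V}
    (h : G.Adj u v) :
    G.lineGraph.degree ⟨s(u, v), h⟩ + 2 = G.degree u + G.degree v := by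
  classical
  have hnbr : (G.lineGraph.neighborFinset ⟨s(u, v), h⟩).map (.subtype _) =
      (G.incidenceFinset u ∪ G.incidenceFinset v).erase s(u, v) := by
    ext e
    simp only [Finset.mem_map, mem_neighborFinset, lineGraph_adj_iff_exists,
      Function.Embedding.subtype_apply, Subtype.exists, exists_and_right, exists_eq_right,
      Finset.mem_erase, Finset.mem_union, mem_incidenceFinset]
    grind [incidenceSet]
  have hinter : G.incidenceFinset u ∩ G.incidenceFinset v = {s(u, v)} := by
    rw [← Finset.coe_inj]
    simpa using G.incidenceSet_inter_incidenceSet_of_adj h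
  have hcard := congrArg Finset.card hnbr
  rw [Finset.card_map, card_neighborFinset_eq_degree] at hcard
  have herase := Finset.card_erase_add_one
    (show s(u, v) ∈ G.incidenceFinset u ∪ G.incidenceFinset v by simp [h])
  have hunion := Finset.card_union_add_card_inter (G.incidenceFinset u) (G.incidenceFinset v)
  rw [hinter, Finset.card_singleton, card_incidenceFinset_eq_degree,
    card_incidenceFinset_eq_degree] at hunion
  omega

theorem exists_triangle_of_two_lt_degree_lineGraph {e : G.edgeSet}
    [Fintype (G.lineGraph.neighborSet e)] (he : 2 < G.lineGraph.degree e) :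
    ∃ f g, G.lineGraph.Adj e f ∧ G.lineGraph.Adj e g ∧ G.lineGraph.Adj f g := by
  obtain ⟨f, g, h, hf, hg, hh, hfg, hfh, hgh⟩ := two_lt_degree_iff.1 he
  obtain ⟨⟨u, v⟩, huv⟩ := e
  have hend : ∀ x : G.edgeSet, G.lineGraph.Adj ⟨s(u, v), huv⟩ x → u ∈ x.1 ∨ v ∈ x.1 := by
    intro x hx
    obtain ⟨-, w, hw, hwx⟩ := lineGraph_adj_iff_exists.1 hx
    obtain rfl | rfl := Sym2.mem_iff.1 hw <;> simp [hwx]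
  -- By pigeonhole, two of `f`, `g`, `h` meet `uv` in the same endpoint.
  have := hend f hf
  have := hend g hg
  have := hend h hh
  grind [lineGraph_adj_of_mem]

theorem two_mul_degree_add_le_chromaticNumber_lineGraph_three [Finite V] [G.LocallyFinite]
    {v a b : V} (ha : G.Adj v a) (hb : G.Adj v b) (hab : a ≠ b) :
    ((2 * G.degree v + G.degree a + G.degree b : ℕ) : ℕ∞) ≤
      G.lineGraph.lineGraph.lineGraph.chromaticNumber + 6 := by
  classical
  have := Fintype.ofFinite V
  let e : G.edgeSet := ⟨s(v, a), ha⟩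
  let f : G.edgeSet := ⟨s(v, b), hb⟩
  have hef : G.lineGraph.Adj e f :=
    lineGraph_adj_of_mem (fun h ↦ hab (Sym2.congr_right.1 (congrArg Subtype.val h)))
      (Sym2.mem_mk_left v a) (Sym2.mem_mk_left v b)
  have he : G.lineGraph.degree e + 2 = _ := degree_lineGraph_add_two ha
  have hf : G.lineGraph.degree f + 2 = _ := degree_lineGraph_add_two hb
  have hdeg := degree_lineGraph_add_two hef
  calc ((2 * G.degree v + G.degree a + G.degree b : ℕ) : ℕ∞)
    _ = (G.lineGraph.lineGraph.degree ⟨s(e, f), hef⟩ : ℕ∞) + 6 := by norm_cast; omega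
    _ ≤ _ := by gcongr; exact degree_le_chromaticNumber_lineGraph _

theorem chromaticNumber_lt_chromaticNumber_lineGraph_three [Fintype V] [DecidableRel G.Adj]
    (htri : ∀ v, 2 < G.degree v → ∃ a b, G.Adj v a ∧ G.Adj v b ∧ G.Adj a b)
    (hmax : 2 < G.maxDegree) :
    G.chromaticNumber < G.lineGraph.lineGraph.lineGraph.chromaticNumber := by
  classical
  suffices h : ∃ (n : ℕ) (v a b : V), G.chromaticNumber ≤ n ∧ G.Adj v a ∧ G.Adj v b ∧ a ≠ b ∧
      n + 6 < 2 * G.degree v + G.degree a + G.degree b by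
    obtain ⟨n, v, a, b, hn, ha, hb, hab, hlt⟩ := h
    refine hn.trans_lt ((ENat.add_lt_add_iff_right (k := 6) (by simp)).1 ?_)
    calc ((n : ℕ∞) + 6) < (2 * G.degree v + G.degree a + G.degree b : ℕ) := by exact_mod_cast hlt
      _ ≤ _ := two_mul_degree_add_le_chromaticNumber_lineGraph_three ha hb hab
  by_cases hcol : G.Colorable G.maxDegree
  · have : Nonempty V := by
      by_contra! h
      simp at hmax
    obtain ⟨v, hv⟩ := G.exists_maximal_degree_vertex
    obtain ⟨x, y, hvx, hvy, hxy⟩ := htri v (hv ▸ hmax)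
    obtain ⟨a, hva, -, ha⟩ := exists_adj_ne_one_lt_degree_of_triangle hvx hvy hxy v
    obtain ⟨b, hvb, hab, hb⟩ := exists_adj_ne_one_lt_degree_of_triangle hvx hvy hxy a
    exact ⟨_, v, a, b, hcol.chromaticNumber_le, hva, hvb, hab, by omega⟩
  · obtain ⟨v, w, hvw, hv, hw⟩ : ∃ v w, G.Adj v w ∧
        G.maxDegree ≤ G.degree v ∧ G.maxDegree ≤ G.degree w := by
      by_contra! h
      refine hcol (colorable_of_forall_adj_degree_lt (by omega) fun a b hab ↦ ?_)
      exact or_iff_not_imp_left.2 fun ha ↦ h a b hab (not_lt.1 ha)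
    obtain ⟨x, y, hvx, hvy, hxy⟩ := htri v (hmax.trans_le hv)
    obtain ⟨b, hvb, hwb, hb⟩ := exists_adj_ne_one_lt_degree_of_triangle hvx hvy hxy w
    exact ⟨_, v, w, b, chromaticNumber_le_maxDegree_add_one, hvw, hvb, hwb, by omega⟩

end LineGraph

section PathsAndCycles

lemma eq_of_forall_lt_adj_iff {V : Type*} [LinearOrder V] {G H : SimpleGraph V}
    (h : ∀ i j, i < j → (G.Adj i j ↔ H.Adj i j)) : G = H := by
  ext i j
  obtain hij | rfl | hij := lt_trichotomy i j
  · exact h i j hij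
  · simp
  · rw [G.adj_comm, H.adj_comm, h j i hij]

lemma cycleGraph_adj_iff_of_lt {n : ℕ} {i j : Fin n} (hij : i < j) :
    (cycleGraph n).Adj i j ↔ i.val + 1 = j.val ∨ i.val = 0 ∧ j.val + 1 = n := by
  rw [cycleGraph_adj', Fin.coe_sub_iff_le.2 hij.le, Fin.coe_sub_iff_lt.2 hij]
  omega

lemma adj_iff_of_pathGraph_le {n : ℕ} {G : SimpleGraph (Fin n)} [G.LocallyFinite]
    {i j : Fin n} (hle : pathGraph n ≤ G) (hdeg : G.degree i ≤ 2) (hi : 0 < i.val)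
    (hin : i.val + 1 < n) : G.Adj i j ↔ (pathGraph n).Adj i j := by
  refine ⟨fun hij ↦ ?_, fun hij ↦ hle hij⟩
  have hprev : G.Adj i ⟨i - 1, by omega⟩ := hle (pathGraph_adj.2 (.inr (by grind)))
  have hnext : G.Adj i ⟨i + 1, hin⟩ := hle (pathGraph_adj.2 (.inl rfl))
  by_contra hne
  rw [pathGraph_adj] at hne
  refine hdeg.not_gt (two_lt_degree_iff.2 ⟨j, _, _, hij, hprev, hnext, ?_, ?_, ?_⟩) <;> grind

lemma eq_pathGraph_or_eq_cycleGraph {n : ℕ} {G : SimpleGraph (Fin n)} [G.LocallyFinite]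
    (hle : pathGraph n ≤ G) (hdeg : ∀ i, G.degree i ≤ 2) :
    G = pathGraph n ∨ G = cycleGraph n := by
  have hpath : ∀ i j : Fin n, i.val + 1 = j.val → G.Adj i j :=
    fun i j h ↦ hle (pathGraph_adj.2 (.inl h))
  have hadj : ∀ i j : Fin n, i < j → G.Adj i j →
      i.val + 1 = j.val ∨ i.val = 0 ∧ j.val + 1 = n := by
    intro i j hij h
    have hi := adj_iff_of_pathGraph_le hle (hdeg i) (j := j)
    have hj := adj_iff_of_pathGraph_le hle (hdeg j) (j := i)
    rw [pathGraph_adj] at hi hj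
    grind [G.adj_comm]
  by_cases hclosed : ∃ i j : Fin n, i.val = 0 ∧ j.val + 1 = n ∧ G.Adj i j
  · obtain ⟨a, b, ha, hb, hab⟩ := hclosed
    refine .inr (eq_of_forall_lt_adj_iff fun i j hij ↦ ?_)
    rw [cycleGraph_adj_iff_of_lt hij]
    refine ⟨hadj i j hij, ?_⟩
    rintro (h | ⟨hi, hj⟩)
    · exact hpath i j h
    · obtain rfl : i = a := by omega
      obtain rfl : j = b := by omega
      exact hab
  · refine .inl (eq_of_forall_lt_adj_iff fun i j hij ↦ ?_)
    rw [pathGraph_adj]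
    grind

variable {V : Type*} {G : SimpleGraph V}

theorem exists_isHamiltonian_of_degree_le_two [Finite V] [DecidableEq V] [G.LocallyFinite]
    (hc : G.Connected) (hdeg : ∀ v, G.degree v ≤ 2) :
    ∃ (u v : V) (p : G.Walk u v), p.IsHamiltonian := by
  have := hc.nonempty
  obtain ⟨u, v, p, hp, hmax⟩ := Walk.exists_isPath_forall_isPath_length_le_length G
  refine ⟨u, v, p, hp.isHamiltonian_of_mem fun w ↦ ?_⟩
  by_contra hw
  obtain ⟨q⟩ := hc u w
  obtain ⟨⟨⟨x, y⟩, hxy⟩, -, hx, hy⟩ :=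
    q.exists_boundary_dart {z | z ∈ p.support} p.start_mem_support hw
  simp only [Set.mem_ofPred_eq] at hx hy
  obtain ⟨i, rfl, hi⟩ := Walk.mem_support_iff_exists_getVert.1 hx
  obtain rfl | hi0 := eq_or_ne i 0
  · have hadj : G.Adj y u := by simpa using hxy.symm
    simpa using hmax _ _ (p.cons hadj) (hp.cons hy)
  obtain rfl | hil := eq_or_ne i p.length
  · have hadj : G.Adj v y := by simpa using hxy
    simpa using hmax _ _ (p.concat hadj) (hp.concat hy hadj)
  have hprev : G.Adj (p.getVert i) (p.getVert (i - 1)) := by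
    simpa [Nat.sub_add_cancel (Nat.pos_of_ne_zero hi0)] using
      (p.adj_getVert_succ (i := i - 1) (by omega)).symm
  have hnext : G.Adj (p.getVert i) (p.getVert (i + 1)) := p.adj_getVert_succ (by omega)
  have hne : p.getVert (i - 1) ≠ p.getVert (i + 1) := fun h ↦ by
    have := hp.getVert_injOn (by grind) (by grind) h
    omega
  refine (hdeg _).not_gt (two_lt_degree_iff.2 ⟨y, _, _, hxy, hprev, hnext, ?_, ?_, hne⟩) <;>
    exact fun h ↦ hy (h ▸ p.getVert_mem_support _)

theorem exists_iso_pathGraph_or_iso_cycleGraph [Finite V] [G.LocallyFinite]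
    (hc : G.Connected) (hdeg : ∀ v, G.degree v ≤ 2) :
    ∃ n, Nonempty (G ≃g pathGraph n) ∨ Nonempty (G ≃g cycleGraph n) := by
  classical
  obtain ⟨u, v, p, hp⟩ := exists_isHamiltonian_of_degree_le_two hc hdeg
  let φ : G.comap hp.getVertEquiv ≃g G := .comap hp.getVertEquiv G
  have : Fintype V := .ofFinite V
  have hle : pathGraph p.support.length ≤ G.comap hp.getVertEquiv := by
    intro i j hij
    obtain h | h := pathGraph_adj.1 hij
    · simpa [← h] using p.adj_getVert_succ (i := i) (by grind [Walk.length_support])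
    · simpa [← h] using (p.adj_getVert_succ (i := j) (by grind [Walk.length_support])).symm
  refine ⟨p.support.length, ?_⟩
  obtain h | h := eq_pathGraph_or_eq_cycleGraph hle fun i ↦ by rw [← φ.degree_eq]; exact hdeg _
  · exact .inl ⟨h ▸ φ.symm⟩
  · exact .inr ⟨h ▸ φ.symm⟩

theorem nonempty_iso_completeBipartiteGraph_of_forall_adj_degree_eq_one [G.LocallyFinite]
    (hc : G.Connected) {u : V} (hu : ∀ w, G.Adj u w → G.degree w = 1) :
    Nonempty (G ≃g completeBipartiteGraph (Fin 1) (Fin (G.degree u))) := by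
  have hleaf : ∀ w x, G.Adj u w → G.Adj w x → x = u := fun w x huw hwx ↦
    (degree_eq_one_iff_existsUnique_adj.1 (hu w huw)).unique hwx huw.symm
  have hstar : ∀ w, w = u ∨ G.Adj u w := by
    by_contra! ⟨w, hw⟩
    obtain ⟨q⟩ := hc u w
    obtain ⟨⟨⟨x, y⟩, hxy⟩, -, hx, hy⟩ :=
      q.exists_boundary_dart {z | z = u ∨ G.Adj u z} (.inl rfl) (not_or.2 hw)
    grind
  let f : Fin 1 ⊕ G.neighborSet u → V := Sum.elim (fun _ ↦ u) (↑)
  have hf : f.Bijective := by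
    constructor
    · rintro (i | ⟨x, hx⟩) (j | ⟨y, hy⟩) h
      · rw [Subsingleton.elim i j]
      · exact absurd h hy.ne
      · exact absurd h hx.ne'
      · exact congrArg Sum.inr (Subtype.ext h)
    · intro w
      obtain rfl | hw := hstar w
      · exact ⟨.inl 0, rfl⟩
      · exact ⟨.inr ⟨w, hw⟩, rfl⟩
  let φ : completeBipartiteGraph (Fin 1) (G.neighborSet u) ≃g G :=
    ⟨.ofBijective f hf, by
      rintro (i | ⟨x, hx⟩) (j | ⟨y, hy⟩)
      · simp [f]
      · simpa [f] using hy
      · simpa [f] using hx.symm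
      · simpa [f] using fun hxy ↦ hy.ne' (hleaf x y hx hxy)⟩
  exact ⟨φ.symm.trans (completeBipartiteGraphCongr (.refl _)
    (Fintype.equivFinOfCardEq (G.card_neighborSet_eq_degree u)))⟩

theorem exists_iso_of_forall_degree_lineGraph_le_two [Finite V] [G.LocallyFinite]
    [G.lineGraph.LocallyFinite] (hc : G.Connected) (hdeg : ∀ e, G.lineGraph.degree e ≤ 2) :
    (∃ n, Nonempty (G ≃g pathGraph n) ∨ Nonempty (G ≃g cycleGraph n)) ∨
      Nonempty (G ≃g completeBipartiteGraph (Fin 1) (Fin 3)) := by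
  by_cases hG : ∀ v, G.degree v ≤ 2
  · exact .inl (exists_iso_pathGraph_or_iso_cycleGraph hc hG)
  push Not at hG
  obtain ⟨u, hu⟩ := hG
  have hsum : ∀ w, G.Adj u w → G.degree u = 3 ∧ G.degree w = 1 := by
    intro w huw
    have := degree_lineGraph_add_two huw
    have := hdeg ⟨s(u, w), huw⟩
    have := huw.degree_pos_right
    omega
  obtain ⟨w, huw⟩ := (G.degree_pos_iff_exists_adj u).1 (by omega)
  have hstar := nonempty_iso_completeBipartiteGraph_of_forall_adj_degree_eq_one hc
    fun w huw ↦ (hsum w huw).2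
  exact .inr ((hsum w huw).1 ▸ hstar)

end PathsAndCycles

/-- For a prolific graph there is `r` with `1 ≤ r ≤ 3` and `χ'(L^r(G)) > χ'(G)`,
where `χ'(H) = χ(L(H))`. -/
theorem chromaticIndex_index_le_three (X : FGraph) [Finite X.V] (hp : X.Prolific) :
    ∃ r : ℕ, 1 ≤ r ∧ r ≤ 3 ∧ X.chromIndex < (X.iter r).chromIndex := by
  classical
  obtain ⟨hc, hpath, hcycle, hstar⟩ := hp
  have := Fintype.ofFinite X.V
  have hmax : 2 < X.G.lineGraph.maxDegree := by
    by_contra! h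
    obtain ⟨n, h | h⟩ | h := exists_iso_of_forall_degree_lineGraph_le_two hc
      fun e ↦ (X.G.lineGraph.degree_le_maxDegree e).trans h
    · exact h.elim (hpath n).false
    · exact h.elim (hcycle n).false
    · exact h.elim hstar.false
  exact ⟨3, by norm_num, le_rfl, chromaticNumber_lt_chromaticNumber_lineGraph_three
    (fun _ ↦ exists_triangle_of_two_lt_degree_lineGraph) hmax⟩
end

section
/- Let G be a prolific graph. Then there exists r with 1 ≤ r ≤ 3 such that ω(L^r(G)) > ω(G), where ω denotes the clique number. -/
open SimpleGraph

/-!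
A connected graph that is neither a path nor a cycle has a vertex of degree at least three, since a
cycle in a graph of maximum degree two is a whole component, and so is a longest path in an acyclic
one. The edges at a vertex of degree `d` form a clique of size `d` in the line graph, which settles
`ω(G) ≤ 2` with `r = 1`.

If `n = ω(G) ≥ 3`, connectedness provides a vertex `a` of degree at least three on a maximum clique.
Let `b`, `c` be two further vertices of that clique. An edge `uv` has degree `deg u + deg v - 2` in
the line graph, so the vertex `{ab, ac}` of `L²(G)` has degree `2 deg a + deg b + deg c - 6`. As
`deg a ≥ max 3 (n - 1)` and `deg b, deg c ≥ n - 1`, this exceeds `n`, and `L³(G)` has a larger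
clique.
-/

section DegreeTwo

variable {V : Type*} {G : SimpleGraph V}

theorem subgraph_eq_top_of_neighborSet_subset (hG : G.Preconnected) {H : G.Subgraph}
    (hne : H.verts.Nonempty) (hH : ∀ v ∈ H.verts, G.neighborSet v ⊆ H.neighborSet v) : H = ⊤ := by
  obtain ⟨x, hx⟩ := hne
  have mem_verts : ∀ y, y ∈ H.verts := by
    by_contra! ⟨y, hy⟩
    obtain ⟨p⟩ := hG x y
    obtain ⟨d, -, hfst, hsnd⟩ := p.exists_boundary_dart H.verts hx hy
    exact hsnd (hH _ hfst d.adj).snd_mem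
  ext u v
  · simp [mem_verts u]
  · exact ⟨fun h => h.adj_sub, fun h => hH u (mem_verts u) h⟩

theorem neighborSet_subset_of_ncard_eq_two {H : G.Subgraph} {v : V}
    (hG : (G.neighborSet v).encard ≤ 2) (hH : (H.neighborSet v).ncard = 2) :
    G.neighborSet v ⊆ H.neighborSet v := by
  have hfin : (H.neighborSet v).Finite := Set.finite_of_ncard_ne_zero (by lia)
  refine (hfin.eq_of_subset_of_encard_le (H.neighborSet_subset v) ?_).ge
  rwa [← hfin.cast_ncard_eq, hH]

theorem neighborSet_toSubgraph_apply {W : Type*} {A : SimpleGraph W} (f : Copy A G) (w : W) :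
    f.toSubgraph.neighborSet (f w) = f '' A.neighborSet w := by
  ext x
  simp only [Subgraph.mem_neighborSet, Subgraph.map_adj, Subgraph.top_adj, Relation.Map,
    Set.mem_image, mem_neighborSet]
  constructor
  · rintro ⟨a, b, hab, ha, rfl⟩
    exact ⟨b, f.injective ha ▸ hab, rfl⟩
  · rintro ⟨b, hb, rfl⟩
    exact ⟨w, b, hb, rfl, rfl⟩

theorem ncard_neighborSet_cycleGraph {m : ℕ} (v : Fin (m + 3)) :
    ((cycleGraph (m + 3)).neighborSet v).ncard = 2 := by
  rw [Set.ncard_eq_toFinset_card', Set.toFinset_card, card_neighborSet_eq_degree,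
    cycleGraph_degree_three_le]

theorem nonempty_iso_cycleGraph_of_isCycle (hG : G.Preconnected)
    (hdeg : ∀ v, (G.neighborSet v).encard ≤ 2) {u : V} {c : G.Walk u u} (hc : c.IsCycle) :
    Nonempty (G ≃g cycleGraph c.length) := by
  obtain ⟨f⟩ := (cycleGraph_isContained_iff hc.three_le_length).2 ⟨u, c, hc, rfl⟩
  obtain ⟨m, hm⟩ := Nat.exists_eq_add_of_le' hc.three_le_length
  rw [hm] at f ⊢
  have htop : f.toSubgraph = ⊤ := by
    refine subgraph_eq_top_of_neighborSet_subset hG ⟨f 0, by simp⟩ ?_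
    rintro _ ⟨w, -, rfl⟩
    refine neighborSet_subset_of_ncard_eq_two (hdeg _) ?_
    change (f.toSubgraph.neighborSet (f w)).ncard = 2
    rw [neighborSet_toSubgraph_apply]
    exact (Set.ncard_image_of_injective _ f.injective).trans (ncard_neighborSet_cycleGraph w)
  have e := f.isoToSubgraph
  rw [htop] at e
  exact ⟨(e.trans Subgraph.topIso).symm⟩

/-- `p` is a path at least as long as every path of `G`, regardless of the endpoints. In an
acyclic graph of maximum degree two, such a path is a connected component. -/
def IsLongestPath {u v : V} (p : G.Walk u v) : Prop :=
  p.IsPath ∧ ∀ (u' v' : V) (q : G.Walk u' v'), q.IsPath → q.length ≤ p.length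

theorem IsLongestPath.reverse {u v : V} {p : G.Walk u v} (hp : IsLongestPath p) :
    IsLongestPath p.reverse :=
  ⟨hp.1.reverse, by simpa using hp.2⟩

theorem IsLongestPath.neighborSet_start_subset (hG : G.IsAcyclic) {u v : V} {p : G.Walk u v}
    (hp : IsLongestPath p) : G.neighborSet u ⊆ p.toSubgraph.neighborSet u := by
  intro w hw
  have hmem : w ∈ p.support := by
    by_contra hnot
    have hle := hp.2 _ _ _ (hp.1.cons (h := hw.symm) hnot)
    exact Nat.not_succ_le_self _ (Walk.length_cons hw.symm p ▸ hle)
  have hnil : ¬ p.Nil := by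
    intro h
    cases h
    simp only [Walk.support_nil, List.mem_singleton] at hmem
    exact G.ne_of_adj hw hmem.symm
  rw [hp.1.neighborSet_toSubgraph_startpoint hnil]
  exact hG.eq_snd_of_adj_start hp.1 hw hmem

theorem IsLongestPath.neighborSet_subset (hG : G.IsAcyclic)
    (hdeg : ∀ x, (G.neighborSet x).encard ≤ 2) {u v : V} {p : G.Walk u v} (hp : IsLongestPath p)
    {x : V} (hx : x ∈ p.support) : G.neighborSet x ⊆ p.toSubgraph.neighborSet x := by
  obtain ⟨i, rfl, hi⟩ := Walk.mem_support_iff_exists_getVert.1 hx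
  rcases Nat.eq_zero_or_pos i with rfl | hpos
  · simpa using hp.neighborSet_start_subset hG
  rcases hi.eq_or_lt with rfl | hlt
  · simpa using hp.reverse.neighborSet_start_subset hG
  · exact neighborSet_subset_of_ncard_eq_two (hdeg _)
      (hp.1.ncard_neighborSet_toSubgraph_internal_eq_two hpos.ne' hlt)

theorem exists_nonempty_iso_pathGraph_of_isAcyclic [Finite G.edgeSet] (hG : G.Connected)
    (hacyc : G.IsAcyclic) (hdeg : ∀ v, (G.neighborSet v).encard ≤ 2) :
    ∃ k, Nonempty (G ≃g pathGraph k) := by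
  classical
  have := hG.nonempty
  obtain ⟨u, v, p, hp, hmax⟩ := Walk.exists_isPath_forall_isPath_length_le_length G
  have hlongest : IsLongestPath p := ⟨hp, hmax⟩
  have htop : p.toSubgraph = ⊤ :=
    subgraph_eq_top_of_neighborSet_subset hG.preconnected ⟨u, by simp⟩ fun x hx =>
      hlongest.neighborSet_subset hacyc hdeg (p.mem_verts_toSubgraph.1 hx)
  have e := hp.pathGraphIsoToSubgraph
  rw [htop] at e
  exact ⟨_, ⟨(e.trans Subgraph.topIso).symm⟩⟩

theorem exists_three_le_encard_neighborSet [Finite G.edgeSet] (hG : G.Connected)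
    (hpath : ∀ k, IsEmpty (G ≃g pathGraph k)) (hcycle : ∀ k, IsEmpty (G ≃g cycleGraph k)) :
    ∃ v, 3 ≤ (G.neighborSet v).encard := by
  by_contra! hlt
  have hdeg : ∀ v, (G.neighborSet v).encard ≤ 2 := fun v => Order.le_of_lt_add_one (hlt v)
  by_cases hacyc : G.IsAcyclic
  · obtain ⟨k, hk⟩ := exists_nonempty_iso_pathGraph_of_isAcyclic hG hacyc hdeg
    exact not_isEmpty_iff.2 hk (hpath k)
  · obtain ⟨u, c, hc⟩ : ∃ (u : V) (c : G.Walk u u), c.IsCycle := by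
      simpa [IsAcyclic] using hacyc
    exact not_isEmpty_iff.2 (nonempty_iso_cycleGraph_of_isCycle hG.preconnected hdeg hc)
      (hcycle _)

end DegreeTwo

section LineGraph

variable {V : Type*} {G : SimpleGraph V}

theorem encard_incidenceSet (v : V) :
    (G.incidenceSet v).encard = (G.neighborSet v).encard := by
  classical
  exact Set.encard_congr (G.incidenceSetEquivNeighborSet v)

theorem isClique_lineGraph_preimage_incidenceSet (v : V) :
    G.lineGraph.IsClique (Subtype.val ⁻¹' G.incidenceSet v) :=
  fun _ he _ he' hne => lineGraph_adj_iff_exists.2 ⟨hne, v, he.2, he'.2⟩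

theorem not_cliqueFree_lineGraph_of_le_encard_neighborSet {v : V} {k : ℕ}
    (hk : k ≤ (G.neighborSet v).encard) : ¬ G.lineGraph.CliqueFree k := by
  have hcard : k ≤ (Subtype.val ⁻¹' G.incidenceSet v : Set G.edgeSet).encard := by
    rwa [Set.encard_preimage_of_injective_subset_range Subtype.val_injective
      (by simpa using G.incidenceSet_subset v), encard_incidenceSet]
  obtain ⟨t, hsub, ht⟩ := Set.exists_subset_encard_eq hcard
  lift t to Finset G.edgeSet using Set.finite_of_encard_eq_coe ht
  have hclique : G.lineGraph.IsNClique k t :=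
    ⟨(isClique_lineGraph_preimage_incidenceSet v).subset hsub, by simpa using ht⟩
  exact hclique.not_cliqueFree

theorem image_val_neighborSet_lineGraph {u v : V} (h : G.Adj u v) :
    Subtype.val '' G.lineGraph.neighborSet ⟨s(u, v), h⟩ =
      (G.incidenceSet u ∪ G.incidenceSet v) \ {s(u, v)} := by
  ext e
  constructor
  · rintro ⟨e, he, rfl⟩
    obtain ⟨hne, w, hw, hwe⟩ := lineGraph_adj_iff_exists.1 he
    have hval : e.val ≠ s(u, v) := fun heq => hne (Subtype.ext heq.symm)
    rcases Sym2.mem_iff.1 hw with rfl | rfl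
    · exact ⟨.inl ⟨e.2, hwe⟩, hval⟩
    · exact ⟨.inr ⟨e.2, hwe⟩, hval⟩
  · rintro ⟨hmem, hne⟩
    have adj_of_mem : ∀ w ∈ s(u, v), e ∈ G.incidenceSet w →
        e ∈ Subtype.val '' G.lineGraph.neighborSet ⟨s(u, v), h⟩ := fun w hw he =>
      ⟨⟨e, he.1⟩, lineGraph_adj_iff_exists.2
        ⟨fun heq => hne (congrArg Subtype.val heq).symm, w, hw, he.2⟩, rfl⟩
    exact hmem.elim (adj_of_mem u (Sym2.mem_mk_left u v)) (adj_of_mem v (Sym2.mem_mk_right u v))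

theorem encard_neighborSet_lineGraph_add_two {u v : V} (h : G.Adj u v) :
    (G.lineGraph.neighborSet ⟨s(u, v), h⟩).encard + 2 =
      (G.neighborSet u).encard + (G.neighborSet v).encard := by
  have hmem : s(u, v) ∈ G.incidenceSet u ∪ G.incidenceSet v :=
    Or.inl (G.mk'_mem_incidenceSet_left_iff.2 h)
  calc (G.lineGraph.neighborSet ⟨s(u, v), h⟩).encard + 2
      = ((G.incidenceSet u ∪ G.incidenceSet v) \ {s(u, v)}).encard + 1 + 1 := by
        rw [← image_val_neighborSet_lineGraph h, Subtype.val_injective.encard_image, add_assoc,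
          one_add_one_eq_two]
    _ = (G.incidenceSet u ∪ G.incidenceSet v).encard +
          (G.incidenceSet u ∩ G.incidenceSet v).encard := by
        rw [Set.encard_sdiff_singleton_add_one hmem,
          G.incidenceSet_inter_incidenceSet_of_adj h, Set.encard_singleton]
    _ = (G.neighborSet u).encard + (G.neighborSet v).encard := by
        rw [Set.encard_union_add_encard_inter, encard_incidenceSet, encard_incidenceSet]

theorem add_sub_two_le_encard_neighborSet_lineGraph {u v : V} (h : G.Adj u v) {p q : ℕ}
    (hp : p ≤ (G.neighborSet u).encard) (hq : q ≤ (G.neighborSet v).encard) :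
    (p + q - 2 : ℕ) ≤ (G.lineGraph.neighborSet ⟨s(u, v), h⟩).encard := by
  push_cast
  rw [tsub_le_iff_right, encard_neighborSet_lineGraph_add_two]
  exact add_le_add hp hq

end LineGraph

section Clique

variable {V : Type*} {G : SimpleGraph V}

theorem encard_le_encard_neighborSet_add_one {s : Set V} (hs : G.IsClique s) {x : V} (hx : x ∈ s) :
    s.encard ≤ (G.neighborSet x).encard + 1 := by
  have hsub : s \ {x} ⊆ G.neighborSet x := fun y hy => hs hx hy.1 (Ne.symm hy.2)
  rw [← Set.encard_sdiff_singleton_add_one hx]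
  gcongr

theorem encard_le_encard_neighborSet_of_adj_notMem {s : Set V} (hs : G.IsClique s) {x y : V}
    (hx : x ∈ s) (hy : y ∉ s) (hxy : G.Adj x y) : s.encard ≤ (G.neighborSet x).encard := by
  have hsub : insert y (s \ {x}) ⊆ G.neighborSet x :=
    Set.insert_subset hxy fun z hz => hs hx hz.1 (Ne.symm hz.2)
  rw [← Set.encard_sdiff_singleton_add_one hx, ← Set.encard_insert_of_notMem fun h => hy h.1]
  exact Set.encard_le_encard hsub

theorem exists_mem_le_encard_neighborSet (hG : G.Preconnected) {s : Set V} (hs : G.IsClique s)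
    (hne : s.Nonempty) {v : V} {k : ℕ∞} (hk : k ≤ s.encard) (hv : k ≤ (G.neighborSet v).encard) :
    ∃ a ∈ s, k ≤ (G.neighborSet a).encard := by
  by_cases hvs : v ∈ s
  · exact ⟨v, hvs, hv⟩
  · obtain ⟨x, hx⟩ := hne
    obtain ⟨p⟩ := hG x v
    obtain ⟨d, -, hfst, hsnd⟩ := p.exists_boundary_dart s hx hvs
    exact ⟨d.fst, hfst,
      hk.trans (encard_le_encard_neighborSet_of_adj_notMem hs hfst hsnd d.adj)⟩

theorem not_cliqueFree_lineGraph_lineGraph_lineGraph {n : ℕ} {s : Finset V}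
    (hs : G.IsNClique n s) (hn : 3 ≤ n) {a : V} (ha : a ∈ s)
    (hdeg : 3 ≤ (G.neighborSet a).encard) :
    ¬ G.lineGraph.lineGraph.lineGraph.CliqueFree (n + 1) := by
  classical
  have clique_deg : ∀ x ∈ s, (n - 1 : ℕ) ≤ (G.neighborSet x).encard := by
    intro x hx
    have := encard_le_encard_neighborSet_add_one hs.isClique hx
    rw [Set.encard_coe_eq_coe_finsetCard, hs.card_eq] at this
    rwa [ENat.natCast_sub, tsub_le_iff_right]
  have deg_a : (max 3 (n - 1) : ℕ) ≤ (G.neighborSet a).encard := by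
    exact_mod_cast max_le hdeg (clique_deg a ha)
  obtain ⟨b, hb, c, hc, hbc⟩ : ∃ b ∈ s.erase a, ∃ c ∈ s.erase a, b ≠ c := by
    rw [← Finset.one_lt_card, Finset.card_erase_of_mem ha, hs.card_eq]
    lia
  rw [Finset.mem_erase] at hb hc
  have hab : G.Adj a b := hs.isClique ha hb.2 hb.1.symm
  have hac : G.Adj a c := hs.isClique ha hc.2 hc.1.symm
  have hadj : G.lineGraph.Adj ⟨s(a, b), hab⟩ ⟨s(a, c), hac⟩ :=
    isClique_lineGraph_preimage_incidenceSet a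
      (G.mk'_mem_incidenceSet_left_iff.2 hab) (G.mk'_mem_incidenceSet_left_iff.2 hac)
      fun h => hbc (Sym2.congr_right.1 (congrArg Subtype.val h))
  have deg_ab := add_sub_two_le_encard_neighborSet_lineGraph hab deg_a (clique_deg b hb.2)
  have deg_ac := add_sub_two_le_encard_neighborSet_lineGraph hac deg_a (clique_deg c hc.2)
  have deg_edge := add_sub_two_le_encard_neighborSet_lineGraph hadj deg_ab deg_ac
  exact fun hfree =>
    not_cliqueFree_lineGraph_of_le_encard_neighborSet deg_edge (hfree.mono (by lia))

theorem not_cliqueFree_lineGraph_or_lineGraph_lineGraph_lineGraph (hG : G.Preconnected) {v : V}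
    (hv : 3 ≤ (G.neighborSet v).encard) {n : ℕ} (hn : ¬ G.CliqueFree n) :
    ¬ G.lineGraph.CliqueFree (n + 1) ∨
      ¬ G.lineGraph.lineGraph.lineGraph.CliqueFree (n + 1) := by
  rcases le_or_gt n 2 with hle | hgt
  · exact .inl fun hfree =>
      not_cliqueFree_lineGraph_of_le_encard_neighborSet (k := 3) hv (hfree.mono (by lia))
  · obtain ⟨s, hs⟩ : ∃ s, G.IsNClique n s := not_forall_not.1 hn
    have hcard : 3 ≤ (s : Set V).encard := by
      rw [Set.encard_coe_eq_coe_finsetCard, hs.card_eq]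
      exact_mod_cast hgt
    have hne : (s : Set V).Nonempty :=
      Set.one_le_encard_iff_nonempty.1 (le_trans (by norm_num) hcard)
    obtain ⟨a, ha, hdeg⟩ := exists_mem_le_encard_neighborSet hG hs.isClique hne hcard hv
    exact .inr (not_cliqueFree_lineGraph_lineGraph_lineGraph hs hgt ha hdeg)

theorem lt_cliqueNum_of_not_cliqueFree [Finite V] {n : ℕ} (h : ¬ G.CliqueFree (n + 1)) :
    n < G.cliqueNum := by
  obtain ⟨s, hs⟩ : ∃ s, G.IsNClique (n + 1) s := not_forall_not.1 h
  exact Nat.lt_of_succ_le (hs.card_eq.ge.trans hs.isClique.card_le_cliqueNum)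

theorem cliqueNum_index_le_three_general [Finite V] (hG : G.Connected)
    (hpath : ∀ k, IsEmpty (G ≃g pathGraph k)) (hcycle : ∀ k, IsEmpty (G ≃g cycleGraph k)) :
    G.cliqueNum < G.lineGraph.cliqueNum ∨
      G.cliqueNum < G.lineGraph.lineGraph.lineGraph.cliqueNum := by
  obtain ⟨v, hv⟩ := exists_three_le_encard_neighborSet hG hpath hcycle
  obtain ⟨s, hs⟩ := G.exists_isNClique_cliqueNum
  exact (not_cliqueFree_lineGraph_or_lineGraph_lineGraph_lineGraph hG.preconnected hv
    hs.not_cliqueFree).imp lt_cliqueNum_of_not_cliqueFree lt_cliqueNum_of_not_cliqueFree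

end Clique

/-- For a prolific graph there is `r` with `1 ≤ r ≤ 3` and `ω(L^r(G)) > ω(G)`. -/
theorem cliqueNum_index_le_three (X : FGraph) [Finite X.V] (hp : X.Prolific) :
    ∃ r : ℕ, 1 ≤ r ∧ r ≤ 3 ∧ X.G.cliqueNum < (X.iter r).G.cliqueNum :=
  (cliqueNum_index_le_three_general hp.1 hp.2.1 hp.2.2.1).elim
    (fun h => ⟨1, le_rfl, by norm_num, h⟩) (fun h => ⟨3, by norm_num, le_rfl, h⟩)
end

section
/- Let G be a prolific graph with minimum degree δ(G) ≥ 3. Then λ(L(G)) > λ(G), where λ denotes the edge connectivity. -/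
open SimpleGraph

/-- The edge connectivity `λ(G)`: the minimum size of a set of edges whose deletion
disconnects the graph. -/
noncomputable def FGraph.edgeConn (X : FGraph) : ℕ :=
  sInf {k | ∃ F : Set (Sym2 X.V), F ⊆ X.G.edgeSet ∧ F.ncard = k ∧
    ¬ (X.G.deleteEdges F).Connected}

/-!
Let `S` be a set of edges of `G`, and at a vertex `v` let `a` and `b` count the edges in `S` and
outside `S`. Since distinct edges share at most one vertex, the cut of `L(G)` around `S` has
`∑ v, a * b` edges. A vertex with `a, b ≥ 1` satisfies `deg v = a + b ≤ a * b + 1`, so it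
contributes at least `deg v - 1 ≥ 2`. Two such vertices together contribute at least
`(λ(G) - 1) + 2`. If there is only one, then deleting its `a` edges in `S`, or its `b` other edges,
disconnects `G`, so `a * b ≥ λ(G) ^ 2`, which exceeds `λ(G)` unless `λ(G) = 1`; and then `2` is
enough.
-/

lemma add_le_mul_add_one {R : Type*} [CommSemiring R] [PartialOrder R] [CanonicallyOrderedAdd R]
    {a b : R} (ha : 1 ≤ a) (hb : 1 ≤ b) : a + b ≤ a * b + 1 := by
  obtain ⟨c, rfl⟩ := exists_add_of_le ha
  obtain ⟨d, rfl⟩ := exists_add_of_le hb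
  calc 1 + c + (1 + d) ≤ 1 + c + (1 + d) + c * d := le_self_add
    _ = (1 + c) * (1 + d) + 1 := by ring

section EdgeCut

variable {V : Type*} {G : SimpleGraph V} {S : Set V} {k : ℕ}

/-- The cut `∂S`: the edges of `G` with one endpoint in `S` and the other outside. -/
def edgeCut (G : SimpleGraph V) (S : Set V) : Set (Sym2 V) :=
  {e | ∃ x ∈ S, ∃ y ∉ S, G.Adj x y ∧ s(x, y) = e}

lemma encard_le_encard_edgeCut {T : Set (V × V)}
    (hT : ∀ p ∈ T, p.1 ∈ S ∧ p.2 ∉ S ∧ G.Adj p.1 p.2) : T.encard ≤ (edgeCut G S).encard := by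
  refine Set.encard_le_encard_of_injOn (f := fun p ↦ s(p.1, p.2)) (fun p hp ↦ ?_) ?_
  · obtain ⟨hx, hy, hadj⟩ := hT p hp
    exact ⟨p.1, hx, p.2, hy, hadj, rfl⟩
  · rintro ⟨x, y⟩ hp ⟨x', y'⟩ hp' heq
    rcases Sym2.eq_iff.1 heq with ⟨rfl, rfl⟩ | ⟨rfl, rfl⟩
    · rfl
    · exact absurd (hT _ hp).1 (hT _ hp').2.1

lemma isEdgeConnected_iff_le_encard_edgeCut :
    G.IsEdgeConnected k ↔
      ∀ S : Set V, S.Nonempty → Sᶜ.Nonempty → (k : ℕ∞) ≤ (edgeCut G S).encard := by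
  constructor
  · rintro hG S ⟨u, hu⟩ ⟨v, hv⟩
    by_contra! hlt
    obtain ⟨p⟩ := hG u v hlt
    obtain ⟨d, -, hfst, hsnd⟩ := p.exists_boundary_dart S hu hv
    obtain ⟨hadj, hnot⟩ := deleteEdges_adj.1 d.adj
    exact hnot ⟨d.fst, hfst, d.snd, hsnd, hadj, rfl⟩
  · intro hcut u v F hF
    by_contra hv
    refine (hF.trans_le (hcut {w | (G.deleteEdges F).Reachable u w} ⟨u, .rfl⟩ ⟨v, hv⟩)).not_ge ?_
    refine Set.encard_le_encard ?_
    rintro _ ⟨x, hx, y, hy, hadj, rfl⟩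
    by_contra hnot
    exact hy (hx.trans (deleteEdges_adj.2 ⟨hadj, hnot⟩).reachable)

end EdgeCut

section LineGraphCut

variable {V : Type*} {G : SimpleGraph V} {S : Set G.edgeSet} {v w : V} {k : ℕ}

/-- The edges of `G` at `v`, as a set of vertices (in fact a clique) of the line graph. -/
def edgesAt (G : SimpleGraph V) (v : V) : Set G.edgeSet := {e | v ∈ (e : Sym2 V)}

lemma image_val_edgesAt : Subtype.val '' edgesAt G v = G.incidenceSet v :=
  Subtype.image_preimage_coe G.edgeSet {e | v ∈ e}

lemma encard_edgesAt : (edgesAt G v).encard = (G.neighborSet v).encard := by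
  classical
  rw [← Subtype.val_injective.encard_image, image_val_edgesAt]
  exact Set.encard_congr (G.incidenceSetEquivNeighborSet v)

lemma nontrivial_edgeSet_of_one_lt_encard_neighborSet (hv : 1 < (G.neighborSet v).encard) :
    Nontrivial G.edgeSet := by
  rw [← encard_edgesAt] at hv
  exact Set.nontrivial_of_nontrivial (Set.one_lt_encard_iff_nontrivial.1 hv)

lemma le_encard_neighborSet [Nontrivial V] (hG : G.IsEdgeConnected k) (v : V) :
    (k : ℕ∞) ≤ (G.neighborSet v).encard := by
  obtain ⟨w, hw⟩ := exists_ne v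
  rw [← encard_edgesAt, ← Subtype.val_injective.encard_image, image_val_edgesAt]
  refine (isEdgeConnected_iff_le_encard_edgeCut.1 hG {v} ⟨v, rfl⟩ ⟨w, hw⟩).trans
    (Set.encard_le_encard ?_)
  rintro _ ⟨_, rfl, y, -, hadj, rfl⟩
  exact (G.mk'_mem_incidenceSet_left_iff).2 hadj

/-- A set `S` of edges splits the vertex `v` if `v` is incident both with an edge in `S` and with
an edge outside `S`. -/
def IsSplit (G : SimpleGraph V) (S : Set G.edgeSet) (v : V) : Prop :=
  (edgesAt G v ∩ S).Nonempty ∧ (edgesAt G v \ S).Nonempty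

lemma isSplit_compl : IsSplit G Sᶜ v ↔ IsSplit G S v := by
  rw [IsSplit, IsSplit, Set.sdiff_compl, ← Set.sdiff_eq, and_comm]

lemma mem_of_not_isSplit {e f : G.edgeSet} (hv : ¬ IsSplit G S v) (hev : e ∈ edgesAt G v)
    (he : e ∈ S) (hfv : f ∈ edgesAt G v) : f ∈ S := by
  by_contra hf
  exact hv ⟨⟨e, hev, he⟩, ⟨f, hfv, hf⟩⟩

lemma exists_isSplit (hG : G.Preconnected) (hS : S.Nonempty) (hSc : Sᶜ.Nonempty) :
    ∃ v, IsSplit G S v := by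
  by_contra! hsplit
  obtain ⟨e, he⟩ := hS
  obtain ⟨f, hf⟩ := hSc
  obtain ⟨p⟩ := hG (e : Sym2 V).out.1 (f : Sym2 V).out.1
  obtain ⟨d, -, ⟨g, hgx, hg⟩, hy⟩ :=
    p.exists_boundary_dart {x | (edgesAt G x ∩ S).Nonempty} ⟨e, Sym2.out_fst_mem _, he⟩
      fun ⟨g, hgx, hg⟩ ↦ hf (mem_of_not_isSplit (hsplit _) hgx hg (Sym2.out_fst_mem _))
  let xy : G.edgeSet := ⟨s(d.fst, d.snd), d.adj⟩
  have hxy : xy ∈ S := mem_of_not_isSplit (hsplit _) hgx hg (Sym2.mem_mk_left _ _)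
  exact hy ⟨xy, Sym2.mem_mk_right _ _, hxy⟩

lemma le_encard_edgesAt_inter (hG : G.IsEdgeConnected k) (hS : S.Nonempty)
    (hv : ∀ w, IsSplit G S w → w = v) : (k : ℕ∞) ≤ (edgesAt G v ∩ S).encard := by
  let U : Set V := {x | x ≠ v ∧ (edgesAt G x ∩ S).Nonempty}
  have hU : U.Nonempty := by
    obtain ⟨⟨⟨a, b⟩, hab⟩, he⟩ := hS
    by_cases ha : a = v
    · exact ⟨b, fun hb ↦ G.ne_of_adj hab (ha.trans hb.symm), _, Sym2.mem_mk_right a b, he⟩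
    · exact ⟨a, ha, _, Sym2.mem_mk_left a b, he⟩
  have hcut : edgeCut G U ⊆ Subtype.val '' (edgesAt G v ∩ S) := by
    rintro _ ⟨x, ⟨hxv, e, hex, he⟩, y, hy, hadj, rfl⟩
    let xy : G.edgeSet := ⟨s(x, y), hadj⟩
    have hxy : xy ∈ S := mem_of_not_isSplit (mt (hv x) hxv) hex he (Sym2.mem_mk_left x y)
    have hyv : y = v := by
      by_contra hyv
      exact hy ⟨hyv, xy, Sym2.mem_mk_right x y, hxy⟩
    exact ⟨xy, ⟨hyv ▸ Sym2.mem_mk_right x y, hxy⟩, rfl⟩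
  rw [← Subtype.val_injective.encard_image]
  exact (isEdgeConnected_iff_le_encard_edgeCut.1 hG U hU ⟨v, fun h ↦ h.1 rfl⟩).trans
    (Set.encard_le_encard hcut)

/-- The pairs of edges at `v`, the first in `S` and the second outside: the edges of the cut of the
line graph around `S` that come from `v`. -/
def splitPairs (G : SimpleGraph V) (S : Set G.edgeSet) (v : V) : Set (G.edgeSet × G.edgeSet) :=
  (edgesAt G v ∩ S) ×ˢ (edgesAt G v \ S)

lemma encard_iUnion_splitPairs_le :
    (⋃ v, splitPairs G S v).encard ≤ (edgeCut G.lineGraph S).encard := by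
  refine encard_le_encard_edgeCut fun ⟨e, f⟩ hef ↦ ?_
  obtain ⟨v, ⟨hev, he⟩, hfv, hf⟩ := Set.mem_iUnion.1 hef
  exact ⟨he, hf, lineGraph_adj_iff_exists.2 ⟨ne_of_mem_of_not_mem he hf, v, hev, hfv⟩⟩

lemma disjoint_splitPairs (hvw : v ≠ w) : Disjoint (splitPairs G S v) (splitPairs G S w) := by
  rw [Set.disjoint_left]
  rintro ⟨e, f⟩ ⟨⟨hev, he⟩, hfv, hf⟩ ⟨⟨hew, -⟩, hfw, -⟩
  have he_eq : (e : Sym2 V) = s(v, w) := (Sym2.mem_and_mem_iff hvw).1 ⟨hev, hew⟩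
  have hf_eq : (f : Sym2 V) = s(v, w) := (Sym2.mem_and_mem_iff hvw).1 ⟨hfv, hfw⟩
  exact ne_of_mem_of_not_mem he hf (Subtype.ext (he_eq.trans hf_eq.symm))

lemma encard_neighborSet_le_encard_splitPairs (hv : IsSplit G S v) :
    (G.neighborSet v).encard ≤ (splitPairs G S v).encard + 1 := by
  rw [← encard_edgesAt, ← Set.encard_sdiff_add_encard_inter (edgesAt G v) S, add_comm, splitPairs,
    Set.encard_prod]
  exact add_le_mul_add_one (Set.one_le_encard_iff_nonempty.2 hv.1)
    (Set.one_le_encard_iff_nonempty.2 hv.2)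

lemma two_le_encard_splitPairs (hdeg : 3 ≤ (G.neighborSet v).encard) (hv : IsSplit G S v) :
    2 ≤ (splitPairs G S v).encard := by
  have h : (2 : ℕ∞) + 1 ≤ (splitPairs G S v).encard + 1 :=
    hdeg.trans (encard_neighborSet_le_encard_splitPairs hv)
  exact (ENat.add_le_add_iff_right ENat.one_ne_top).1 h

lemma lt_encard_edgeCut_lineGraph_of_two_isSplit (hG : G.IsEdgeConnected k)
    (hdeg : 3 ≤ (G.neighborSet w).encard) (hv : IsSplit G S v) (hw : IsSplit G S w)
    (hvw : v ≠ w) : (k : ℕ∞) < (edgeCut G.lineGraph S).encard := by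
  have : Nontrivial V := ⟨v, w, hvw⟩
  rw [← ENat.natCast_add_one_le_iff]
  calc (k : ℕ∞) + 1
    _ ≤ (splitPairs G S v).encard + 1 + 1 := by
      gcongr
      exact (le_encard_neighborSet hG v).trans (encard_neighborSet_le_encard_splitPairs hv)
    _ = (splitPairs G S v).encard + 2 := by rw [add_assoc, one_add_one_eq_two]
    _ ≤ (splitPairs G S v).encard + (splitPairs G S w).encard := by
      gcongr
      exact two_le_encard_splitPairs hdeg hw
    _ = (splitPairs G S v ∪ splitPairs G S w).encard :=
      (Set.encard_union_eq (disjoint_splitPairs hvw)).symm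
    _ ≤ (⋃ u, splitPairs G S u).encard :=
      Set.encard_le_encard (Set.union_subset (Set.subset_iUnion _ v) (Set.subset_iUnion _ w))
    _ ≤ (edgeCut G.lineGraph S).encard := encard_iUnion_splitPairs_le

lemma lt_encard_edgeCut_lineGraph_of_unique_isSplit (hk : k ≠ 0) (hG : G.IsEdgeConnected k)
    (hdeg : 3 ≤ (G.neighborSet v).encard) (hv : IsSplit G S v)
    (huniq : ∀ w, IsSplit G S w → w = v) : (k : ℕ∞) < (edgeCut G.lineGraph S).encard := by
  have hin : (k : ℕ∞) ≤ (edgesAt G v ∩ S).encard :=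
    le_encard_edgesAt_inter hG (hv.1.mono Set.inter_subset_right) huniq
  have hout : (k : ℕ∞) ≤ (edgesAt G v \ S).encard := by
    rw [Set.sdiff_eq]
    exact le_encard_edgesAt_inter hG (hv.2.mono fun _ h ↦ h.2)
      fun w hw ↦ huniq w (isSplit_compl.1 hw)
  have hpairs : (k : ℕ∞) < (splitPairs G S v).encard := by
    obtain rfl | hk2 : k = 1 ∨ 2 ≤ k := by lia
    · exact lt_of_lt_of_le (by norm_num) (two_le_encard_splitPairs hdeg hv)
    · rw [splitPairs, Set.encard_prod]
      exact lt_of_lt_of_le (by exact_mod_cast Nat.lt_mul_self_iff.2 hk2) (mul_le_mul' hin hout)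
  exact hpairs.trans_le
    ((Set.encard_le_encard (Set.subset_iUnion _ v)).trans encard_iUnion_splitPairs_le)

end LineGraphCut

theorem edgeConn_line_gt_general {V : Type*} {G : SimpleGraph V} {k : ℕ} (hk : k ≠ 0)
    (hG : G.IsEdgeConnected k) (hdeg : ∀ v, 3 ≤ (G.neighborSet v).encard) :
    G.lineGraph.IsEdgeConnected (k + 1) := by
  refine isEdgeConnected_iff_le_encard_edgeCut.2 fun S hS hSc ↦ ?_
  rw [Nat.cast_add_one, ENat.natCast_add_one_le_iff]
  obtain ⟨v, hv⟩ := exists_isSplit (hG.preconnected hk) hS hSc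
  by_cases! huniq : ∀ w, IsSplit G S w → w = v
  · exact lt_encard_edgeCut_lineGraph_of_unique_isSplit hk hG (hdeg v) hv huniq
  · obtain ⟨w, hw, hwv⟩ := huniq
    exact lt_encard_edgeCut_lineGraph_of_two_isSplit hG (hdeg w) hv hw hwv.symm

namespace FGraph

variable (X : FGraph)

lemma isEdgeConnected_edgeConn : X.G.IsEdgeConnected X.edgeConn := by
  intro u v F hF
  by_contra huv
  have hcut : X.edgeConn ≤ (F ∩ X.G.edgeSet).ncard :=
    Nat.sInf_le ⟨F ∩ X.G.edgeSet, Set.inter_subset_right, rfl, fun h ↦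
      huv (deleteEdges_eq_inter_edgeSet F ▸ h.preconnected u v)⟩
  have hle : ((F ∩ X.G.edgeSet).ncard : ℕ∞) ≤ F.encard :=
    (Set.ncard_le_encard _).trans (Set.encard_le_encard Set.inter_subset_left)
  exact hF.not_ge (le_trans (by exact_mod_cast hcut) hle)

variable {X}

lemma le_edgeConn [Finite X.V] [Nontrivial X.V] {k : ℕ} (hX : X.G.IsEdgeConnected k) :
    k ≤ X.edgeConn := by
  refine le_csInf ?_ ?_
  · refine ⟨_, X.G.edgeSet, subset_rfl, rfl, ?_⟩
    rw [deleteEdges_eq_bot.2 subset_rfl]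
    exact not_connected_bot
  · rintro _ ⟨F, -, rfl, hF⟩
    by_contra! hlt
    have hlt' : F.encard < k := by
      rw [← F.toFinite.cast_ncard_eq]
      exact_mod_cast hlt
    exact hF ⟨fun u v ↦ hX u v hlt'⟩

lemma le_encard_neighborSet_of_le_minDeg {d : ℕ} (hd : d ≤ X.minDeg) (v : X.V) :
    (d : ℕ∞) ≤ (X.G.neighborSet v).encard := by
  have hdeg : d ≤ (X.G.neighborSet v).ncard := hd.trans (Nat.sInf_le ⟨v, rfl⟩)
  exact le_trans (by exact_mod_cast hdeg) (Set.ncard_le_encard _)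

end FGraph

/-- For a prolific graph with `δ(G) ≥ 3`, `λ(L(G)) > λ(G)`. -/
theorem edgeConn_line_gt (X : FGraph) [Finite X.V] (hp : X.Prolific)
    (h3 : 3 ≤ X.minDeg) : X.edgeConn < X.line.edgeConn := by
  have hdeg (v : X.V) : 3 ≤ (X.G.neighborSet v).encard :=
    FGraph.le_encard_neighborSet_of_le_minDeg h3 v
  obtain ⟨v⟩ := hp.1.nonempty
  have hv : 1 < (X.G.neighborSet v).encard := lt_of_lt_of_le (by norm_num) (hdeg v)
  have : Nontrivial X.V := Set.nontrivial_of_nontrivial (Set.one_lt_encard_iff_nontrivial.1 hv)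
  have : Nontrivial X.line.V := nontrivial_edgeSet_of_one_lt_encard_neighborSet hv
  have : Finite X.line.V := inferInstanceAs (Finite X.G.edgeSet)
  have hpos : 1 ≤ X.edgeConn := FGraph.le_edgeConn (isEdgeConnected_one.2 hp.1.preconnected)
  exact FGraph.le_edgeConn
    (edgeConn_line_gt_general (Nat.one_le_iff_ne_zero.1 hpos) X.isEdgeConnected_edgeConn hdeg)
end

section
/- Let G be a prolific graph with minimum degree δ(G) ≥ 3. Then α(L^2(G)) > α(G), where α denotes the independence number. -/
open SimpleGraph

/-- The independence number `α(G)`: the maximum size of a set of pairwise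
non-adjacent vertices. -/
noncomputable def FGraph.indepNum (X : FGraph) : ℕ :=
  sSup {k | ∃ s : Set X.V, s.Pairwise (fun u v => ¬ X.G.Adj u v) ∧ s.ncard = k}

/-!
A vertex of `L(L(G))` is a pair of edges of `G` with a common endpoint: a path `a - v - b`, here
called a cherry with centre `v`. Two cherries are non-adjacent in `L(L(G))` as soon as they have no
edge in common, so `α(L(L(G)))` is at least the size of any edge-disjoint family of cherries.

Let `I` be a maximum independent set and `w` a vertex outside it. At every vertex of `I ∪ {w}`
choose a cherry whose leaves avoid `w`; this is possible since all degrees are at least three. An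
edge shared by two such cherries would join their centres, and then neither centre could be `w`,
so the edge would join two vertices of `I`. Hence these `α(G) + 1` cherries are edge-disjoint.
-/

section LineGraph

variable {V ι : Type*} {G : SimpleGraph V}

theorem ncard_le_indepNum [Finite V] {s : Set V} (hs : G.IsIndepSet s) :
    s.ncard ≤ G.indepNum := by
  have hs' : G.IsIndepSet s.toFinite.toFinset := by rwa [Set.Finite.coe_toFinset]
  rw [Set.ncard_eq_toFinset_card s]
  exact hs'.card_le_indepNum

theorem isIndepSet_range_of_pairwise_disjoint {c : ι → G.edgeSet}
    (hc : Pairwise fun i j ↦ Disjoint (c i : Set V) (c j : Set V)) :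
    G.lineGraph.IsIndepSet (Set.range c) := by
  rintro _ ⟨i, rfl⟩ _ ⟨j, rfl⟩ hij hadj
  exact Set.not_disjoint_iff_nonempty_inter.2 hadj.2 (hc (ne_of_apply_ne c hij))

theorem injective_of_pairwise_disjoint {c : ι → G.edgeSet}
    (hc : Pairwise fun i j ↦ Disjoint (c i : Set V) (c j : Set V)) :
    Function.Injective c := by
  intro i j hij
  by_contra hne
  obtain ⟨v, hv⟩ : ((c i : Sym2 V) : Set V).Nonempty := ⟨_, Sym2.out_fst_mem _⟩
  exact Set.disjoint_left.1 (hc hne) hv (hij ▸ hv)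

theorem card_le_indepNum_lineGraph [Finite G.edgeSet] {c : ι → G.edgeSet}
    (hc : Pairwise fun i j ↦ Disjoint (c i : Set V) (c j : Set V)) :
    Nat.card ι ≤ G.lineGraph.indepNum := by
  rw [← Set.ncard_range_of_injective (injective_of_pairwise_disjoint hc)]
  exact ncard_le_indepNum (isIndepSet_range_of_pairwise_disjoint hc)

/-- The cherry with centre `v` and leaves `a ≠ b`: the path `a - v - b`, encoded as the edge of the
line graph joining `va` to `vb`, that is, as a vertex of the second iterated line graph. -/
def cherry {v a b : V} (ha : G.Adj v a) (hb : G.Adj v b) (hab : a ≠ b) : G.lineGraph.edgeSet :=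
  ⟨s(⟨s(v, a), ha⟩, ⟨s(v, b), hb⟩), lineGraph_adj_iff_exists.2
    ⟨fun h ↦ hab (Sym2.congr_right.1 (congrArg Subtype.val h)),
      v, Sym2.mem_mk_left v a, Sym2.mem_mk_left v b⟩⟩

theorem exists_eq_of_mem_cherry {s : Set V} {v a b : V} (ha : G.Adj v a) (hb : G.Adj v b)
    (hab : a ≠ b) (has : a ∈ s) (hbs : b ∈ s) {e : G.edgeSet}
    (he : e ∈ (cherry ha hb hab : Sym2 G.edgeSet)) : ∃ x ∈ s, (e : Sym2 V) = s(v, x) := by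
  rcases Sym2.mem_iff.1 he with rfl | rfl
  exacts [⟨a, has, rfl⟩, ⟨b, hbs, rfl⟩]

/-- Here `x ∈ N v` is read as an orientation of the edge `vx` from `v` to `x`. -/
theorem ncard_le_indepNum_lineGraph_lineGraph [Finite V] {S : Set V} {N : V → Set V}
    (hN : ∀ v ∈ S, N v ⊆ G.neighborSet v) (hnontriv : ∀ v ∈ S, (N v).Nontrivial)
    (hasymm : S.Pairwise fun u v ↦ v ∈ N u → u ∉ N v) :
    S.ncard ≤ G.lineGraph.lineGraph.indepNum := by
  choose a ha b hb hab using fun v : S ↦ hnontriv v v.2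
  let c (v : S) : G.lineGraph.edgeSet := cherry (hN v v.2 (ha v)) (hN v v.2 (hb v)) (hab v)
  have hc : Pairwise fun u v ↦ Disjoint (c u : Set G.edgeSet) (c v : Set G.edgeSet) := by
    intro u v huv
    have huv' : (u : V) ≠ v := Subtype.coe_ne_coe.2 huv
    refine Set.disjoint_left.2 fun e heu hev ↦ ?_
    obtain ⟨x, hx, hex⟩ := exists_eq_of_mem_cherry _ _ _ (ha u) (hb u) heu
    obtain ⟨y, hy, hey⟩ := exists_eq_of_mem_cherry _ _ _ (ha v) (hb v) hev
    rcases Sym2.eq_iff.1 (hex.symm.trans hey) with ⟨h, -⟩ | ⟨rfl, rfl⟩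
    · exact huv' h
    · exact hasymm u.2 v.2 huv' hx hy
  exact card_le_indepNum_lineGraph hc

theorem ncard_lt_indepNum_lineGraph_lineGraph [Finite V] {I : Set V} (hI : G.IsIndepSet I)
    {w : V} (hw : w ∉ I) (hnontriv : ∀ v ∈ insert w I, (G.neighborSet v \ {w}).Nontrivial) :
    I.ncard < G.lineGraph.lineGraph.indepNum := by
  have hasymm : (insert w I).Pairwise fun u v ↦
      v ∈ G.neighborSet u \ {w} → u ∉ G.neighborSet v \ {w} := by
    rintro u hu v hv huv ⟨hadj, hvw⟩ ⟨-, huw⟩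
    exact hI (hu.resolve_left huw) (hv.resolve_left hvw) huv hadj
  calc I.ncard < (insert w I).ncard := by
        rw [Set.ncard_insert_of_notMem hw]
        exact Nat.lt_succ_self _
    _ ≤ G.lineGraph.lineGraph.indepNum :=
        ncard_le_indepNum_lineGraph_lineGraph (fun _ _ ↦ Set.sdiff_subset) hnontriv hasymm

theorem indepNum_lt_indepNum_lineGraph_lineGraph [Finite V] [Nonempty V]
    (hdeg : ∀ v, 3 ≤ (G.neighborSet v).ncard) : G.indepNum < G.lineGraph.lineGraph.indepNum := by
  have hnontriv (v w : V) : (G.neighborSet v \ {w}).Nontrivial := by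
    rw [← Set.one_lt_ncard_iff_nontrivial]
    have := Set.pred_ncard_le_ncard_sdiff_singleton (G.neighborSet v) w
    have := hdeg v
    omega
  obtain ⟨I, hI⟩ := G.exists_isNIndepSet_indepNum
  obtain ⟨v⟩ := ‹Nonempty V›
  obtain ⟨u, hvu, -⟩ := (hnontriv v v).nonempty
  obtain ⟨w, hw, -⟩ := IsIndepSet.nonempty_mem_compl_mem_edge G hI.isIndepSet
    (e := s(v, u)) hvu
  rw [← hI.card_eq, ← Set.ncard_coe_finset]
  exact ncard_lt_indepNum_lineGraph_lineGraph hI.isIndepSet hw fun v _ ↦ hnontriv v w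

end LineGraph

namespace FGraph

theorem indepNum_eq (X : FGraph) [Finite X.V] : X.indepNum = X.G.indepNum := by
  apply congrArg sSup
  ext k
  constructor
  · rintro ⟨s, hs, rfl⟩
    refine ⟨s.toFinite.toFinset, ?_, (Set.ncard_eq_toFinset_card s).symm⟩
    rwa [Set.Finite.coe_toFinset]
  · rintro ⟨s, hs⟩
    exact ⟨s, hs.isIndepSet, (Set.ncard_coe_finset s).trans hs.card_eq⟩

theorem minDeg_le_ncard_neighborSet (X : FGraph) (v : X.V) :
    X.minDeg ≤ (X.G.neighborSet v).ncard :=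
  Nat.sInf_le ⟨v, rfl⟩

theorem nonempty_of_minDeg_pos {X : FGraph} (h : 0 < X.minDeg) : Nonempty X.V :=
  Set.range_nonempty_iff_nonempty.1 (Nat.nonempty_of_pos_sInf h)

instance (X : FGraph) [Finite X.V] : Finite X.line.V :=
  inferInstanceAs (Finite X.G.edgeSet)

end FGraph

theorem indepNum_iter_two_gt_general (X : FGraph) [Finite X.V] (h3 : 3 ≤ X.minDeg) :
    X.indepNum < (X.iter 2).indepNum := by
  have : Nonempty X.V := FGraph.nonempty_of_minDeg_pos (by omega)
  have hdeg (v : X.V) : 3 ≤ (X.G.neighborSet v).ncard :=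
    h3.trans (X.minDeg_le_ncard_neighborSet v)
  change X.indepNum < X.line.line.indepNum
  rw [X.indepNum_eq, X.line.line.indepNum_eq]
  exact indepNum_lt_indepNum_lineGraph_lineGraph hdeg

/-- For a prolific graph with `δ(G) ≥ 3`, `α(L²(G)) > α(G)`. -/
theorem indepNum_iter_two_gt (X : FGraph) [Finite X.V] (hp : X.Prolific)
    (h3 : 3 ≤ X.minDeg) : X.indepNum < (X.iter 2).indepNum :=
  indepNum_iter_two_gt_general X h3
end

section
/- Let G be a finite connected graph with m edges. Then the independence number of its second iterated line graph equals the matching number of its line graph, and both equal ⌊m/2⌋: α(L^2(G)) = μ(L(G)) = ⌊m/2⌋. -/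
open SimpleGraph

/-- The matching number `μ(G)`: the maximum number of pairwise disjoint edges. -/
noncomputable def FGraph.matchNum (X : FGraph) : ℕ :=
  sSup {k | ∃ s : Set (Sym2 X.V), s ⊆ X.G.edgeSet ∧
    s.Pairwise (fun e f => ∀ v : X.V, ¬(v ∈ e ∧ v ∈ f)) ∧ s.ncard = k}

/-!
Line graphs are claw-free, and in a finite connected claw-free graph some matching misses at most
one vertex (Sumner, Las Vergnas). Indeed, let `a ≠ z` be missed by a matching `M`, and let `b, c` be
the next two vertices on a walk from `a` to `z`. If `b` is missed too, add the edge `ab` to `M`.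
Otherwise `M` matches `b` to some `d`. If `a` is equal or adjacent to `c`, skip `b`; if `d` is equal
or adjacent to `c`, replace `bd` by `ab`, so that `d` is missed; if neither, then `a ~ d` by the
claw-free condition at `b`, so replace `bd` by `ad`, after which `b` is missed. In each case the
walk gets shorter, so eventually `M` can be enlarged.
-/

/-- A graph is claw-free if it has no induced `K_{1,3}`: among any three distinct neighbours of a
vertex, two are adjacent. -/
def IsClawFree {V : Type*} (H : SimpleGraph V) : Prop :=
  ∀ ⦃c x y z : V⦄, H.Adj c x → H.Adj c y → H.Adj c z → x ≠ y → x ≠ z → y ≠ z →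
    H.Adj x y ∨ H.Adj x z ∨ H.Adj y z

/-- A matching of `H`, encoded as in `FGraph.matchNum` by its set of pairwise disjoint edges. -/
def IsEdgeMatching {V : Type*} (H : SimpleGraph V) (M : Set (Sym2 V)) : Prop :=
  M ⊆ H.edgeSet ∧ M.Pairwise (fun e f => ∀ v : V, ¬(v ∈ e ∧ v ∈ f))

/-- The set of vertices covered by a set of edges. -/
def coveredVerts {V : Type*} (M : Set (Sym2 V)) : Set V :=
  ⋃ e ∈ M, (e : Set V)

section Covered

variable {V : Type*} {M : Set (Sym2 V)}

lemma mem_coveredVerts {v : V} : v ∈ coveredVerts M ↔ ∃ e ∈ M, v ∈ e := by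
  simp only [coveredVerts, Set.mem_iUnion, SetLike.mem_coe, exists_prop]

lemma mem_coveredVerts_iff_exists_mk {v : V} : v ∈ coveredVerts M ↔ ∃ w, s(v, w) ∈ M := by
  refine mem_coveredVerts.trans ⟨?_, fun ⟨w, hw⟩ => ⟨_, hw, Sym2.mem_mk_left v w⟩⟩
  rintro ⟨e, he, w, rfl⟩
  exact ⟨w, he⟩

lemma coveredVerts_insert (a b : V) :
    coveredVerts (insert s(a, b) M) = {a, b} ∪ coveredVerts M := by
  rw [coveredVerts, Set.biUnion_insert, Sym2.coe_mk, coveredVerts]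

lemma coveredVerts_mono {N : Set (Sym2 V)} (h : M ⊆ N) : coveredVerts M ⊆ coveredVerts N :=
  Set.biUnion_subset_biUnion_left h

lemma mk_notMem_of_left_notMem_coveredVerts {a : V} (ha : a ∉ coveredVerts M) (b : V) :
    s(a, b) ∉ M :=
  fun h => ha (mem_coveredVerts_iff_exists_mk.2 ⟨b, h⟩)

end Covered

namespace IsEdgeMatching

variable {V : Type*} {H : SimpleGraph V} {M : Set (Sym2 V)}

lemma empty : IsEdgeMatching H ∅ :=
  ⟨Set.empty_subset _, Set.pairwise_empty _⟩

lemma mono {N : Set (Sym2 V)} (hM : IsEdgeMatching H M) (h : N ⊆ M) : IsEdgeMatching H N :=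
  ⟨h.trans hM.1, hM.2.mono h⟩

lemma insert_mk {a b : V} (hM : IsEdgeMatching H M) (hab : H.Adj a b)
    (ha : a ∉ coveredVerts M) (hb : b ∉ coveredVerts M) :
    IsEdgeMatching H (insert s(a, b) M) := by
  refine ⟨Set.insert_subset hab hM.1, hM.2.insert fun f hf _ => ?_⟩
  have hdisj : ∀ v ∈ s(a, b), v ∉ f := by
    intro v hv hvf
    have hcov : v ∈ coveredVerts M := mem_coveredVerts.2 ⟨f, hf, hvf⟩
    rcases Sym2.mem_iff.1 hv with rfl | rfl
    exacts [ha hcov, hb hcov]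
  exact ⟨fun v hv => hdisj v hv.1 hv.2, fun v hv => hdisj v hv.2 hv.1⟩

lemma notMem_coveredVerts_sdiff {e : Sym2 V} {v : V} (hM : IsEdgeMatching H M) (he : e ∈ M)
    (hv : v ∈ e) : v ∉ coveredVerts (M \ {e}) := by
  rw [mem_coveredVerts]
  rintro ⟨f, ⟨hf, hfe⟩, hvf⟩
  exact hM.2 hf he hfe v ⟨hvf, hv⟩

lemma exists_exchange {a b c : V} (hM : IsEdgeMatching H M) (hbc : s(b, c) ∈ M)
    (ha : a ∉ coveredVerts M) (hac : H.Adj a c) :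
    ∃ N, IsEdgeMatching H N ∧ N.encard = M.encard ∧ b ∉ coveredVerts N ∧
      ∀ v ∉ coveredVerts M, v ≠ a → v ∉ coveredVerts N := by
  have hb : b ∈ coveredVerts M := mem_coveredVerts_iff_exists_mk.2 ⟨c, hbc⟩
  have hc : c ∈ coveredVerts M := mem_coveredVerts.2 ⟨_, hbc, Sym2.mem_mk_right b c⟩
  have hsub : coveredVerts (M \ {s(b, c)}) ⊆ coveredVerts M := coveredVerts_mono Set.sdiff_subset
  refine ⟨insert s(a, c) (M \ {s(b, c)}), ?_, ?_, ?_, fun v hv hva => ?_⟩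
  · exact (hM.mono Set.sdiff_subset).insert_mk hac (fun h => ha (hsub h))
      (hM.notMem_coveredVerts_sdiff hbc (Sym2.mem_mk_right b c))
  · exact Set.encard_exchange (mk_notMem_of_left_notMem_coveredVerts ha c) hbc
  · rw [coveredVerts_insert]
    rintro (((rfl : b = a) | (rfl : b = c)) | h)
    · exact ha hb
    · exact H.ne_of_adj (hM.1 hbc) rfl
    · exact hM.notMem_coveredVerts_sdiff hbc (Sym2.mem_mk_left b c) h
  · rw [coveredVerts_insert]
    rintro ((h | (rfl : v = c)) | h)
    · exact hva h
    · exact hv hc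
    · exact hv (hsub h)

lemma ncard_coveredVerts (hM : IsEdgeMatching H M) (hfin : M.Finite) :
    (coveredVerts M).ncard = 2 * M.ncard := by
  have hcard : ∀ e ∈ M, (e : Set V).ncard = 2 := by
    rintro ⟨a, b⟩ he
    rw [Sym2.coe_mk, Set.ncard_pair (H.ne_of_adj (hM.1 he))]
  have hdisj : M.PairwiseDisjoint (fun e => (e : Set V)) := fun e he f hf hne =>
    Set.disjoint_left.2 fun v hve hvf => hM.2 he hf hne v ⟨hve, hvf⟩
  calc (coveredVerts M).ncard
      = ∑ᶠ e ∈ M, (e : Set V).ncard :=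
        hfin.ncard_biUnion (fun e he => Set.finite_of_ncard_ne_zero (by simp [hcard e he])) hdisj
    _ = ∑ᶠ e ∈ M, 2 := finsum_mem_congr rfl hcard
    _ = 2 * M.ncard := by
        rw [finsum_mem_eq_finite_toFinset_sum _ hfin, Finset.sum_const, smul_eq_mul, mul_comm,
          Set.ncard_eq_toFinset_card M hfin]

lemma two_mul_ncard_le [Finite V] (hM : IsEdgeMatching H M) : 2 * M.ncard ≤ Nat.card V :=
  hM.ncard_coveredVerts M.toFinite ▸ Set.ncard_le_card _

lemma exists_larger_of_adj {a b : V} (hM : IsEdgeMatching H M) (hab : H.Adj a b)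
    (ha : a ∉ coveredVerts M) (hb : b ∉ coveredVerts M) :
    ∃ N, IsEdgeMatching H N ∧ N.encard = M.encard + 1 :=
  ⟨_, hM.insert_mk hab ha hb,
    Set.encard_insert_of_notMem (mk_notMem_of_left_notMem_coveredVerts ha b)⟩

end IsEdgeMatching

section ClawFree

variable {V : Type*} {H : SimpleGraph V}

lemma IsClawFree.exists_larger_matching (hH : IsClawFree H) {b z : V} (p : H.Walk b z)
    {a : V} {M : Set (Sym2 V)} (hM : IsEdgeMatching H M) (hab : a = b ∨ H.Adj a b)
    (ha : a ∉ coveredVerts M) (hz : z ∉ coveredVerts M) (haz : a ≠ z) :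
    ∃ N, IsEdgeMatching H N ∧ N.encard = M.encard + 1 := by
  induction p generalizing a M with
  | nil => exact hM.exists_larger_of_adj (hab.resolve_left haz) ha hz
  | @cons b c z hbc _ ih =>
    rcases hab with rfl | hab
    · exact ih hM (.inr hbc) ha hz haz
    by_cases hb : b ∈ coveredVerts M
    swap
    · exact hM.exists_larger_of_adj hab ha hb
    by_cases hac : a = c ∨ H.Adj a c
    · exact ih hM hac ha hz haz
    obtain ⟨hac_ne, hac⟩ := not_or.1 hac
    obtain ⟨d, hbd⟩ := mem_coveredVerts_iff_exists_mk.1 hb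
    have hd : d ∈ coveredVerts M := mem_coveredVerts.2 ⟨_, hbd, Sym2.mem_mk_right b d⟩
    by_cases hdc : d = c ∨ H.Adj d c
    · obtain ⟨N, hN, hcard, hdN, hmiss⟩ := hM.exists_exchange (Sym2.eq_swap ▸ hbd) ha hab
      exact hcard ▸ ih hN hdc hdN (hmiss z hz haz.symm) (ne_of_mem_of_not_mem hd hz)
    · obtain ⟨hdc_ne, hdc⟩ := not_or.1 hdc
      have had : H.Adj a d :=
        (hH hab.symm (hM.1 hbd) hbc (ne_of_mem_of_not_mem hd ha).symm hac_ne hdc_ne).resolve_right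
          (not_or.2 ⟨hac, hdc⟩)
      obtain ⟨N, hN, hcard, hbN, hmiss⟩ := hM.exists_exchange hbd ha had
      exact hcard ▸ ih hN (.inr hbc) hbN (hmiss z hz haz.symm) (ne_of_mem_of_not_mem hb hz)

/-- The **Sumner–Las Vergnas theorem**, for graphs of either parity. -/
theorem IsClawFree.exists_near_perfect_matching [Finite V] (hH : IsClawFree H)
    (hconn : H.Preconnected) :
    ∃ M, IsEdgeMatching H M ∧ Nat.card V ≤ 2 * M.ncard + 1 := by
  obtain ⟨M, hM, hmax⟩ := (Set.toFinite {M | IsEdgeMatching H M}).exists_maximalFor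
    Set.ncard _ ⟨∅, IsEdgeMatching.empty⟩
  have hmissed : (coveredVerts M)ᶜ.ncard ≤ 1 := by
    refine (Set.ncard_le_one (Set.toFinite _)).2 fun a ha z hz => ?_
    by_contra haz
    obtain ⟨p⟩ := hconn a z
    obtain ⟨N, hN, hcard⟩ := hH.exists_larger_matching p hM (.inl rfl) ha hz haz
    have hlt : M.ncard < N.ncard := by
      rw [← N.toFinite.cast_ncard_eq, ← M.toFinite.cast_ncard_eq] at hcard
      exact Nat.lt_of_succ_le (by exact_mod_cast hcard.ge)
    exact hlt.not_ge (hmax hN hlt.le)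
  refine ⟨M, hM, ?_⟩
  rw [← Set.ncard_add_ncard_compl (coveredVerts M), hM.ncard_coveredVerts M.toFinite]
  exact Nat.add_le_add_left hmissed _

end ClawFree

section LineGraph

variable {V : Type*}

lemma isClawFree_lineGraph (G : SimpleGraph V) : IsClawFree G.lineGraph := by
  rintro ⟨e, he⟩ x y z hx hy hz hxy hxz hyz
  simp only [lineGraph_adj_iff_exists] at hx hy hz ⊢
  obtain ⟨-, u, hue, hux⟩ := hx
  obtain ⟨-, v, hve, hvy⟩ := hy
  obtain ⟨-, w, hwe, hwz⟩ := hz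
  have pigeonhole : u = v ∨ u = w ∨ v = w := by
    induction e with | h a b => grind
  rcases pigeonhole with rfl | rfl | rfl
  · exact .inl ⟨hxy, u, hux, hvy⟩
  · exact .inr (.inl ⟨hxz, u, hux, hwz⟩)
  · exact .inr (.inr ⟨hyz, v, hvy, hwz⟩)

variable {G : SimpleGraph V}

lemma lineGraph_reachable_of_mem {e f : G.edgeSet} {v : V} (he : v ∈ (e : Sym2 V))
    (hf : v ∈ (f : Sym2 V)) : G.lineGraph.Reachable e f := by
  by_cases hef : e = f
  · rw [hef]
  · exact (lineGraph_adj_iff_exists.2 ⟨hef, v, he, hf⟩).reachable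

lemma lineGraph_reachable_of_walk {u v : V} (p : G.Walk u v) {e f : G.edgeSet}
    (he : u ∈ (e : Sym2 V)) (hf : v ∈ (f : Sym2 V)) : G.lineGraph.Reachable e f := by
  induction p generalizing e with
  | nil => exact lineGraph_reachable_of_mem he hf
  | @cons u w _ huw _ ih =>
    let g : G.edgeSet := ⟨s(u, w), huw⟩
    have heg : G.lineGraph.Reachable e g := lineGraph_reachable_of_mem he (Sym2.mem_mk_left u w)
    exact heg.trans (ih (Sym2.mem_mk_right u w) hf)

lemma lineGraph_preconnected (hG : G.Preconnected) : G.lineGraph.Preconnected := fun e f =>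
  (hG _ _).elim fun p =>
    lineGraph_reachable_of_walk p (Sym2.out_fst_mem (e : Sym2 V)) (Sym2.out_fst_mem (f : Sym2 V))

end LineGraph

lemma matchNum_eq_n_div_two (Y : FGraph) [Finite Y.V] (hY : IsClawFree Y.G)
    (hconn : Y.G.Preconnected) : Y.matchNum = Y.n / 2 := by
  obtain ⟨M, hM, hcard⟩ := hY.exists_near_perfect_matching hconn
  refine IsGreatest.csSup_eq ⟨⟨M, hM.1, hM.2, ?_⟩, ?_⟩
  · have hle := hM.two_mul_ncard_le
    rw [FGraph.n]
    omega
  · rintro _ ⟨N, hNsub, hNdisj, rfl⟩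
    have hle := IsEdgeMatching.two_mul_ncard_le ⟨hNsub, hNdisj⟩
    rw [FGraph.n]
    omega

lemma isEdgeMatching_image_val_iff {V : Type*} {G : SimpleGraph V} {s : Set G.edgeSet} :
    IsEdgeMatching G (Subtype.val '' s) ↔ s.Pairwise (fun e f => ¬ G.lineGraph.Adj e f) := by
  have hsub : Subtype.val '' s ⊆ G.edgeSet := Subtype.coe_image_subset _ s
  rw [IsEdgeMatching, and_iff_right hsub, Subtype.val_injective.injOn.pairwise_image]
  refine forall₅_congr fun e _ f _ hef => ?_
  simp only [Function.onFun, lineGraph_adj_iff_exists, hef, ne_eq, not_false_eq_true, true_and,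
    not_exists]

lemma indepNum_line (Y : FGraph) : Y.line.indepNum = Y.matchNum := by
  unfold FGraph.indepNum FGraph.matchNum
  congr 1
  ext k
  constructor
  · rintro ⟨s, hs, rfl⟩
    obtain ⟨hsub, hdisj⟩ := isEdgeMatching_image_val_iff.2 hs
    exact ⟨_, hsub, hdisj, Set.ncard_image_of_injective _ Subtype.val_injective⟩
  · rintro ⟨M, hsub, hdisj, rfl⟩
    obtain ⟨s, rfl⟩ := Set.subset_range_iff_exists_image_eq.1 (hsub.trans_eq Subtype.range_coe.symm)
    exact ⟨s, isEdgeMatching_image_val_iff.1 ⟨hsub, hdisj⟩,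
      (Set.ncard_image_of_injective _ Subtype.val_injective).symm⟩

theorem indepNum_iter_two_eq_general (X : FGraph) [Finite X.G.edgeSet]
    (hconn : X.G.lineGraph.Preconnected) :
    (X.iter 2).indepNum = (X.iter 1).matchNum ∧ (X.iter 1).matchNum = X.e / 2 :=
  have : Finite X.line.V := ‹Finite X.G.edgeSet›
  ⟨indepNum_line X.line, matchNum_eq_n_div_two X.line (isClawFree_lineGraph X.G) hconn⟩

/-- For a finite connected graph with `m` edges,
`α(L²(G)) = μ(L(G)) = ⌊m/2⌋`. -/
theorem indepNum_iter_two_eq (X : FGraph) [Finite X.V] (hc : X.G.Connected) :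
    (X.iter 2).indepNum = (X.iter 1).matchNum ∧ (X.iter 1).matchNum = X.e / 2 :=
  indepNum_iter_two_eq_general X (lineGraph_preconnected hc.preconnected)
end
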